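/- arXiv:2401.04019 — 2 statements merged into one kernel-verified Lean document; each statement's English description precedes it below -/
import Mathlib

section
/- Let k ≥ 1 be an integer. Then for all integers n ≥ 0, (−1)^{k−1} · ( ρ_6(n) − Σ_{j=−k}^{k} (−1)^j b_6(n − j(3j−1)/2) ) ≥ 0, and the inequality is strict whenever n ≥ (k+1)(3(k+1)−1)/2. -/
/-- `b6 m` is the number of 6-regular partitions of `m` (partitions with no part
divisible by 6), with `b6 m = 0` for `m < 0`. A partition is a multiset of positive parts. -/
noncomputable def b6 (m : ℤ) : ℕ :=
  Nat.card {s : Multiset ℕ // (s.sum : ℤ) = m ∧ ∀ a ∈ s, 0 < a ∧ ¬ 6 ∣ a}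

/-!
The generating function of the `ℓ`-regular partitions times Euler's product `∏ (1 - X ^ i)` is
`∏ (1 - X ^ (ℓ * i))`, so the pentagonal number theorem, applied to both products, gives
`ρ_ℓ(n) = ∑ (-1) ^ j * b_ℓ(n - j(3j-1)/2)` over all integers `j`. Truncating at `|j| ≤ k` leaves
a remainder which, up to a global sign, is the alternating sum over `j > k` of the nonnegative
numbers `b_ℓ(n - j(3j-1)/2) + b_ℓ(n - j(3j+1)/2)`. For `ℓ ≥ 2` parts equal to `1` are allowed, so
`b_ℓ` is monotone and these numbers decrease with `j`; the remainder is therefore nonnegative. Its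
first two terms differ as soon as `n` reaches the pentagonal number of `k + 1`: the arguments of
`b_ℓ` drop by at least `3`, while every size has an `ℓ`-regular partition with fewer than three
parts equal to `1`.
-/

section AlternatingSum

variable {R : Type*} [Ring R]

lemma alternating_sum_range_succ (u : ℕ → R) (d : ℕ) :
    ∑ i ∈ Finset.range (d + 1), (-1) ^ i * u i =
      u 0 - ∑ i ∈ Finset.range d, (-1) ^ i * u (i + 1) := by
  simp [Finset.sum_range_succ', pow_succ, sub_eq_neg_add]

variable [PartialOrder R] [IsOrderedRing R] {u : ℕ → R}

lemma alternating_sum_mem_Icc (hu : Antitone u) (h0 : ∀ i, 0 ≤ u i) (d : ℕ) :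
    ∑ i ∈ Finset.range d, (-1) ^ i * u i ∈ Set.Icc 0 (u 0) := by
  induction d generalizing u with
  | zero => simpa using h0 0
  | succ d ih =>
    obtain ⟨tail_nonneg, tail_le⟩ :=
      ih (u := fun i ↦ u (i + 1)) (fun _ _ h ↦ hu (by gcongr)) (fun i ↦ h0 (i + 1))
    rw [alternating_sum_range_succ]
    exact ⟨sub_nonneg.2 (tail_le.trans (hu zero_le_one)), sub_le_self _ tail_nonneg⟩

lemma alternating_sum_pos (hu : Antitone u) (h0 : ∀ i, 0 ≤ u i) (h10 : u 1 < u 0) (d : ℕ) :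
    0 < ∑ i ∈ Finset.range (d + 1), (-1) ^ i * u i := by
  rw [alternating_sum_range_succ, sub_pos]
  have tail_mem := alternating_sum_mem_Icc (u := fun i ↦ u (i + 1))
    (fun _ _ h ↦ hu (by gcongr)) (fun i ↦ h0 (i + 1)) d
  exact tail_mem.2.trans_lt h10

end AlternatingSum

lemma sum_Icc_neg_add {M : Type*} [AddCommGroup M] (t : ℤ → M) (k d : ℕ) :
    ∑ j ∈ Finset.Icc (-((k + d : ℕ) : ℤ)) (k + d : ℕ), t j =
      ∑ j ∈ Finset.Icc (-(k : ℤ)) k, t j +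
        ∑ i ∈ Finset.range d, (t (k + 1 + i : ℕ) + t (-(k + 1 + i : ℕ))) := by
  induction d with
  | zero => simp
  | succ d ih =>
    rw [Finset.sum_range_succ, ← add_assoc k d 1, Nat.cast_succ,
      Finset.sum_Icc_succ_eq_add_endpoints, ih, add_right_comm k 1 d]
    push_cast
    abel

section Pentagonal

lemma natAbs_le_pentagonal (j : ℤ) : j.natAbs ≤ pentagonal j := by
  have two_mul_pentagonal := two_mul_natCast_pentagonal j
  zify
  rcases lt_trichotomy j 0 with hj | rfl | hj
  · rw [abs_of_neg hj]
    nlinarith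
  · simp
  · rw [abs_of_pos hj]
    nlinarith

lemma monotone_pentagonal_natCast : Monotone fun m : ℕ ↦ pentagonal m :=
  fun _ _ h ↦ pentagonal_strictMonoOn.monotoneOn (by simp) (by simp) (by gcongr)

lemma monotone_pentagonal_neg_natCast : Monotone fun m : ℕ ↦ pentagonal (-m) :=
  fun _ _ h ↦ pentagonal_strictAntiOn.antitoneOn (by simp) (by simp) (by gcongr)

lemma pentagonal_natCast_succ (m : ℕ) :
    pentagonal (m + 1 : ℕ) = pentagonal m + (3 * m + 1) := by
  have := two_mul_natCast_pentagonal m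
  have := two_mul_natCast_pentagonal (m + 1 : ℕ)
  grind

end Pentagonal

section PowerSeries

open PowerSeries PowerSeries.WithPiTopology

lemma continuous_powerSeries_expand {R : Type*} [CommRing R] [TopologicalSpace R] {ℓ : ℕ}
    (hℓ : ℓ ≠ 0) : Continuous (expand (R := R) ℓ hℓ) := by
  refine continuous_iff_continuousAt.2 fun f ↦ (tendsto_iff_coeff_tendsto _ _ _ _).2 fun d ↦ ?_
  simp only [coeff_expand]
  split_ifs
  · exact (continuous_coeff R _).continuousAt
  · exact tendsto_const_nhds

lemma hasProd_one_sub_X_pow_mul (R : Type*) [CommRing R] [TopologicalSpace R] {ℓ : ℕ}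
    (hℓ : ℓ ≠ 0) :
    HasProd (fun i ↦ (1 - X ^ ((i + 1) * ℓ) : R⟦X⟧)) (expand ℓ hℓ (pentagonalSeries R)) := by
  convert (hasProd_one_sub_X_pow R).map (expand ℓ hℓ) (continuous_powerSeries_expand hℓ) using 1
  ext1 i
  simp [← pow_mul, mul_comm]

lemma pentagonalSeries_mul_mk_card_restricted (R : Type*) [CommRing R] [NoZeroDivisors R] {ℓ : ℕ}
    (hℓ : ℓ ≠ 0) :
    pentagonalSeries R * mk (fun n ↦ ((Nat.Partition.restricted n (¬ ℓ ∣ ·)).card : R)) =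
      expand ℓ hℓ (pentagonalSeries R) := by
  let : TopologicalSpace R := ⊥
  have : DiscreteTopology R := ⟨rfl⟩
  have hpos := Nat.pos_of_ne_zero hℓ
  -- Glaisher: regular partitions may be traded for those with no part repeated `ℓ` times,
  -- whose Euler factors are finite geometric sums.
  rw [Nat.Partition.powerSeriesMk_card_restricted_eq_powerSeriesMk_card_countRestricted R hpos]
  have product := (hasProd_one_sub_X_pow R).mul
    (Nat.Partition.hasProd_powerSeriesMk_card_countRestricted R hpos)
  simp_rw [pow_mul, mul_neg_geom_sum, ← pow_mul] at product
  exact product.unique (hasProd_one_sub_X_pow_mul R hℓ)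

lemma coeff_pentagonalSeries_mul {R : Type*} [CommRing R] (f : R⟦X⟧) {n N : ℕ} (hN : n ≤ N) :
    (pentagonalSeries R * f).coeff n =
      ∑ j ∈ Finset.Icc (-(N : ℤ)) N with pentagonal j ≤ n,
        (-1) ^ j.natAbs * f.coeff (n - pentagonal j) := by
  rw [coeff_mul, Finset.Nat.sum_antidiagonal_eq_sum_range_succ_mk]
  symm
  refine Finset.sum_of_injOn pentagonal pentagonal_injective.injOn ?_ ?_ ?_
  · intro j hj
    simpa [Nat.lt_succ_iff] using (Finset.mem_filter.1 hj).2
  · intro b hb hb_image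
    rw [coeff_pentagonalSeries_eq_zero, zero_mul]
    rintro ⟨j, rfl⟩
    have := natAbs_le_pentagonal j
    exact hb_image ⟨j, by grind, rfl⟩
  · intro j _
    rw [coeff_pentagonalSeries_pentagonal, Int.coe_negOnePow]

lemma eq_coeff_expand_pentagonalSeries {R : Type*} [CommRing R] {ℓ : ℕ} (hℓ : ℓ ≠ 0) {ρ : ℤ → R}
    (hρ1 : ∀ i : ℤ, ρ (ℓ * (i * (3 * i - 1) / 2)) = (-1) ^ i.natAbs)
    (hρ2 : ∀ m : ℤ, (∀ i : ℤ, m ≠ ℓ * (i * (3 * i - 1) / 2)) → ρ m = 0) (n : ℕ) :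
    ρ n = (expand ℓ hℓ (pentagonalSeries R)).coeff n := by
  by_cases h : ∃ i : ℤ, n = ℓ * pentagonal i
  · obtain ⟨i, rfl⟩ := h
    rw [coeff_expand_mul, coeff_pentagonalSeries_pentagonal, Nat.cast_mul, natCast_pentagonal,
      hρ1, Int.coe_negOnePow]
  · have hρ_zero : ρ n = 0 := hρ2 n fun i hi ↦
      h ⟨i, by rw [← natCast_pentagonal] at hi; exact_mod_cast hi⟩
    rw [hρ_zero, coeff_expand]
    split_ifs with hdvd
    · obtain ⟨m, rfl⟩ := hdvd
      rw [Nat.mul_div_cancel_left m (Nat.pos_of_ne_zero hℓ), coeff_pentagonalSeries_eq_zero]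
      rintro ⟨i, rfl⟩
      exact h ⟨i, rfl⟩
    · rfl

end PowerSeries

/-- The `ℓ`-regular partitions of `m`, as multisets of positive parts not divisible by `ℓ`. The
size `m` is an integer, so that there are none for `m < 0`. -/
abbrev RegularPartition (ℓ : ℕ) (m : ℤ) : Type :=
  {s : Multiset ℕ // (s.sum : ℤ) = m ∧ ∀ a ∈ s, 0 < a ∧ ¬ ℓ ∣ a}

/-- The number `b_ℓ(m)` of `ℓ`-regular partitions of `m`; it vanishes for `m < 0`. -/
noncomputable def regularPartitionCount (ℓ : ℕ) (m : ℤ) : ℕ :=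
  Nat.card (RegularPartition ℓ m)

namespace RegularPartition

variable {ℓ : ℕ}

lemma isEmpty_of_neg {m : ℤ} (hm : m < 0) : IsEmpty (RegularPartition ℓ m) :=
  ⟨fun s ↦ by have := s.2.1; omega⟩

/-- The identification of `RegularPartition` with Mathlib's `Nat.Partition.restricted`, through
which the generating function of the latter becomes available. -/
def equivRestricted (ℓ n : ℕ) :
    RegularPartition ℓ n ≃ Nat.Partition.restricted n (¬ ℓ ∣ ·) where
  toFun s := ⟨⟨s.1, fun h ↦ (s.2.2 _ h).1, by exact_mod_cast s.2.1⟩,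
    Finset.mem_filter.2 ⟨Finset.mem_univ _, fun a ha ↦ (s.2.2 a ha).2⟩⟩
  invFun p := ⟨p.1.parts, by exact_mod_cast p.1.parts_sum,
    fun a ha ↦ ⟨p.1.parts_pos ha, (Finset.mem_filter.1 p.2).2 a ha⟩⟩

instance (m : ℤ) : Finite (RegularPartition ℓ m) := by
  rcases lt_or_ge m 0 with hm | hm
  · have := isEmpty_of_neg (ℓ := ℓ) hm
    infer_instance
  · lift m to ℕ using hm
    exact Finite.of_equiv _ (equivRestricted ℓ m).symm

/-- The `ℓ`-regular partition of `m + r` obtained by adjoining `r` parts equal to `1`. -/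
def addOnes (hℓ : ℓ ≠ 1) (m : ℤ) (r : ℕ) (s : RegularPartition ℓ m) :
    RegularPartition ℓ (m + r) :=
  ⟨s.1 + Multiset.replicate r 1, by simp [s.2.1], fun a ha ↦ by
    rcases Multiset.mem_add.1 ha with ha | ha
    · exact s.2.2 a ha
    · rw [Multiset.eq_of_mem_replicate ha, Nat.dvd_one]
      exact ⟨one_pos, hℓ⟩⟩

lemma addOnes_injective (hℓ : ℓ ≠ 1) (m : ℤ) (r : ℕ) :
    Function.Injective (addOnes hℓ m r) :=
  fun _ _ h ↦ Subtype.ext (add_right_cancel (congrArg Subtype.val h))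

lemma le_count_one_addOnes (hℓ : ℓ ≠ 1) {m : ℤ} (r : ℕ) (s : RegularPartition ℓ m) :
    r ≤ (addOnes hℓ m r s).1.count 1 := by
  simp [addOnes]

lemma exists_count_one_lt_three (hℓ : ℓ ≠ 1) (n : ℕ) :
    ∃ s : RegularPartition ℓ n, s.1.count 1 < 3 := by
  obtain ⟨a, ha, ha_dvd⟩ : ∃ a, (a = 2 ∨ a = 3) ∧ ¬ ℓ ∣ a := by
    by_contra! h
    exact hℓ (Nat.dvd_one.1 ((Nat.dvd_add_right (h 2 (by simp))).1 (h 3 (by simp))))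
  refine ⟨⟨Multiset.replicate (n / a) a + Multiset.replicate (n % a) 1, ?_, ?_⟩, ?_⟩
  · simpa using mod_cast Nat.div_add_mod' n a
  · intro b hb
    rcases Multiset.mem_add.1 hb with hb | hb <;> rw [Multiset.eq_of_mem_replicate hb]
    · exact ⟨by omega, ha_dvd⟩
    · exact ⟨one_pos, by rwa [Nat.dvd_one]⟩
  · have ha_ne_one : a ≠ 1 := by omega
    have : n % a < a := Nat.mod_lt n (by omega)
    simp only [Multiset.count_add, Multiset.count_replicate, ha_ne_one, if_false, if_true]
    omega

end RegularPartition

section RegularPartitionCount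

open RegularPartition

variable {ℓ : ℕ}

lemma regularPartitionCount_of_neg {m : ℤ} (hm : m < 0) : regularPartitionCount ℓ m = 0 :=
  have := isEmpty_of_neg (ℓ := ℓ) hm
  Nat.card_of_isEmpty

lemma regularPartitionCount_natCast (ℓ n : ℕ) :
    regularPartitionCount ℓ n = (Nat.Partition.restricted n (¬ ℓ ∣ ·)).card := by
  rw [regularPartitionCount, Nat.card_congr (equivRestricted ℓ n), Nat.card_eq_fintype_card,
    Fintype.card_coe]

lemma regularPartitionCount_mono (hℓ : ℓ ≠ 1) : Monotone (regularPartitionCount ℓ) := by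
  intro x y hxy
  obtain ⟨r, rfl⟩ := Int.le.dest hxy
  exact Nat.card_le_card_of_injective _ (addOnes_injective hℓ x r)

lemma regularPartitionCount_lt (hℓ : ℓ ≠ 1) {x y : ℤ} (hxy : x + 3 ≤ y) (hy : 0 ≤ y) :
    regularPartitionCount ℓ x < regularPartitionCount ℓ y := by
  obtain ⟨r, rfl⟩ : ∃ r : ℕ, x + r = y := Int.le.dest (by omega)
  have not_surjective : ¬ Function.Surjective (addOnes hℓ x r) := by
    intro h
    obtain ⟨s, hs⟩ : ∃ s : RegularPartition ℓ (x + r), s.1.count 1 < 3 := by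
      obtain ⟨n, hn⟩ := Int.eq_ofNat_of_zero_le hy
      rw [hn]
      exact exists_count_one_lt_three hℓ n
    obtain ⟨t, rfl⟩ := h s
    have := le_count_one_addOnes hℓ r t
    omega
  have := Fintype.ofFinite (RegularPartition ℓ x)
  have := Fintype.ofFinite (RegularPartition ℓ (x + r))
  simpa only [regularPartitionCount, Nat.card_eq_fintype_card] using
    Fintype.card_lt_of_injective_not_surjective _ (addOnes_injective hℓ x r) not_surjective

lemma coeff_expand_pentagonalSeries_eq_sum (hℓ : ℓ ≠ 0) {n N : ℕ} (hN : n ≤ N) :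
    (PowerSeries.expand ℓ hℓ (PowerSeries.pentagonalSeries ℤ)).coeff n =
      ∑ j ∈ Finset.Icc (-(N : ℤ)) N,
        (-1) ^ j.natAbs * (regularPartitionCount ℓ (n - j * (3 * j - 1) / 2) : ℤ) := by
  rw [← pentagonalSeries_mul_mk_card_restricted, coeff_pentagonalSeries_mul _ hN,
    Finset.sum_filter]
  refine Finset.sum_congr rfl fun j _ ↦ ?_
  rw [← natCast_pentagonal]
  split_ifs with h
  · rw [PowerSeries.coeff_mk, ← Nat.cast_sub h, regularPartitionCount_natCast]
  · rw [regularPartitionCount_of_neg (by omega), Nat.cast_zero, mul_zero]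

end RegularPartitionCount

/-- The contribution `b_ℓ(n - m(3m-1)/2) + b_ℓ(n - m(3m+1)/2)` of `j = m` and `j = -m`, without
its sign `(-1) ^ m`, to the pentagonal number expansion of `ρ_ℓ(n)`. -/
noncomputable def pentagonalPair (ℓ n m : ℕ) : ℤ :=
  regularPartitionCount ℓ (n - pentagonal m) + regularPartitionCount ℓ (n - pentagonal (-m))

section PentagonalPair

variable {ℓ : ℕ}

lemma pentagonalPair_nonneg (ℓ n m : ℕ) : 0 ≤ pentagonalPair ℓ n m := by
  unfold pentagonalPair
  positivity

lemma pentagonalPair_antitone (hℓ : ℓ ≠ 1) (n : ℕ) : Antitone (pentagonalPair ℓ n) := by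
  intro m m' h
  have := monotone_pentagonal_natCast h
  have := monotone_pentagonal_neg_natCast h
  unfold pentagonalPair
  gcongr <;> apply regularPartitionCount_mono hℓ <;> gcongr

lemma pentagonalPair_succ_lt (hℓ : ℓ ≠ 1) {n m : ℕ} (hm : 1 ≤ m) (hn : pentagonal m ≤ n) :
    pentagonalPair ℓ n (m + 1) < pentagonalPair ℓ n m := by
  have h_pos : regularPartitionCount ℓ (n - pentagonal (m + 1 : ℕ)) <
      regularPartitionCount ℓ (n - pentagonal m) :=
    regularPartitionCount_lt hℓ (by have := pentagonal_natCast_succ m; omega) (by omega)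
  have h_neg : regularPartitionCount ℓ (n - pentagonal (-(m + 1 : ℕ))) ≤
      regularPartitionCount ℓ (n - pentagonal (-m)) :=
    regularPartitionCount_mono hℓ
      (sub_le_sub_left (mod_cast monotone_pentagonal_neg_natCast m.le_succ) _)
  exact add_lt_add_of_lt_of_le (Nat.cast_lt.2 h_pos) (Nat.cast_le.2 h_neg)

lemma truncated_sum_eq_alternating_sum (hℓ : ℓ ≠ 0) (k n : ℕ) :
    (-1) ^ (k + 1) * ((PowerSeries.expand ℓ hℓ (PowerSeries.pentagonalSeries ℤ)).coeff n -
        ∑ j ∈ Finset.Icc (-(k : ℤ)) k,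
          (-1) ^ j.natAbs * (regularPartitionCount ℓ (n - j * (3 * j - 1) / 2) : ℤ)) =
      ∑ i ∈ Finset.range (n + 1), (-1) ^ i * pentagonalPair ℓ n (k + 1 + i) := by
  rw [coeff_expand_pentagonalSeries_eq_sum hℓ (by omega : n ≤ k + (n + 1)), sum_Icc_neg_add,
    add_sub_cancel_left, Finset.mul_sum]
  refine Finset.sum_congr rfl fun i _ ↦ ?_
  have sign : (-1 : ℤ) ^ (k + 1) * (-1) ^ (k + 1 + i) = (-1) ^ i := by
    rw [pow_add _ (k + 1) i, ← mul_assoc, ← mul_pow, neg_one_mul, neg_neg, one_pow, one_mul]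
  rw [Int.natAbs_neg, Int.natAbs_natCast, ← mul_add, ← mul_assoc, sign, ← natCast_pentagonal,
    ← natCast_pentagonal, pentagonalPair]

end PentagonalPair

theorem stmt4_general {ℓ : ℕ} (hℓ : 2 ≤ ℓ) (k : ℕ) (ρ : ℤ → ℤ)
    (hρ1 : ∀ i : ℤ, ρ (ℓ * (i * (3 * i - 1) / 2)) = (-1) ^ i.natAbs)
    (hρ2 : ∀ m : ℤ, (∀ i : ℤ, m ≠ ℓ * (i * (3 * i - 1) / 2)) → ρ m = 0) (n : ℕ) :
    0 ≤ (-1 : ℤ) ^ (k + 1) *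
          (ρ n - ∑ j ∈ Finset.Icc (-(k : ℤ)) (k : ℤ),
            (-1 : ℤ) ^ j.natAbs * (regularPartitionCount ℓ (n - j * (3 * j - 1) / 2) : ℤ)) ∧
      (((k : ℤ) + 1) * (3 * ((k : ℤ) + 1) - 1) / 2 ≤ n →
        0 < (-1 : ℤ) ^ (k + 1) *
          (ρ n - ∑ j ∈ Finset.Icc (-(k : ℤ)) (k : ℤ),
            (-1 : ℤ) ^ j.natAbs * (regularPartitionCount ℓ (n - j * (3 * j - 1) / 2) : ℤ))) := by
  have hℓ_zero : ℓ ≠ 0 := by omega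
  have hℓ_one : ℓ ≠ 1 := by omega
  have antitone_tail : Antitone fun i ↦ pentagonalPair ℓ n (k + 1 + i) :=
    fun _ _ h ↦ pentagonalPair_antitone hℓ_one n (by gcongr)
  have nonneg_tail (i : ℕ) : 0 ≤ pentagonalPair ℓ n (k + 1 + i) := pentagonalPair_nonneg ..
  rw [eq_coeff_expand_pentagonalSeries hℓ_zero hρ1 hρ2, truncated_sum_eq_alternating_sum]
  refine ⟨(alternating_sum_mem_Icc antitone_tail nonneg_tail _).1, fun hkn ↦ ?_⟩
  have pentagonal_le : pentagonal (k + 1 : ℕ) ≤ n := by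
    zify
    rw [natCast_pentagonal]
    exact_mod_cast hkn
  exact alternating_sum_pos antitone_tail nonneg_tail
    (pentagonalPair_succ_lt hℓ_one (by omega) pentagonal_le) n

/-- For `k ≥ 1` and `n ≥ 0`,
`(−1)^{k−1} (ρ_6(n) − Σ_{j=−k}^{k} (−1)^j b_6(n − j(3j−1)/2)) ≥ 0`,
with strict inequality whenever `n ≥ (k+1)(3(k+1)−1)/2`. -/
theorem stmt4 (k : ℕ) (hk : 1 ≤ k)
    (ρ : ℤ → ℤ)
    (hρ1 : ∀ i : ℤ, ρ (6 * (i * (3 * i - 1) / 2)) = (-1) ^ i.natAbs)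
    (hρ2 : ∀ m : ℤ, (∀ i : ℤ, m ≠ 6 * (i * (3 * i - 1) / 2)) → ρ m = 0)
    (n : ℤ) (hn : 0 ≤ n) :
    0 ≤ (-1 : ℤ) ^ (k - 1) *
          (ρ n - ∑ j ∈ Finset.Icc (-(k : ℤ)) (k : ℤ),
            (-1 : ℤ) ^ j.natAbs * (b6 (n - j * (3 * j - 1) / 2) : ℤ)) ∧
      (((k : ℤ) + 1) * (3 * ((k : ℤ) + 1) - 1) / 2 ≤ n →
        0 < (-1 : ℤ) ^ (k - 1) *
          (ρ n - ∑ j ∈ Finset.Icc (-(k : ℤ)) (k : ℤ),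
            (-1 : ℤ) ^ j.natAbs * (b6 (n - j * (3 * j - 1) / 2) : ℤ))) := by
  lift n to ℕ using hn
  rw [neg_one_pow_congr (show Even (k - 1) ↔ Even (k + 1) by grind)]
  exact stmt4_general (ℓ := 6) (by norm_num) k ρ hρ1 hρ2 n
end

section
/- For every integer n ≥ 0, Q̄_{4,3}(n) + Q̄_{4,1}(n) ≥ Q(n − 1). -/
/-- `Q m` is the number of partitions of `m` into distinct parts, with `Q m = 0`
for `m < 0`. A partition is a multiset of positive parts. -/
noncomputable def Q (m : ℤ) : ℕ :=
  Nat.card {s : Multiset ℕ // (s.sum : ℤ) = m ∧ s.Nodup ∧ ∀ a ∈ s, 0 < a}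

/-- `Qbar a m` is the number of partitions `π` of `m` into odd parts such that
`mex_{4,a}(π) ≡ 4 + a (mod 8)`, where `mex_{4,a}(π)` is the smallest positive
integer congruent to `a` mod `4` that is not a part of `π`. -/
noncomputable def Qbar (a : ℕ) (m : ℤ) : ℕ :=
  Nat.card {s : Multiset ℕ // (s.sum : ℤ) = m ∧ (∀ x ∈ s, Odd x) ∧
    (sInf {x : ℕ | 0 < x ∧ x % 4 = a % 4 ∧ x ∉ s}) % 8 = (4 + a) % 8}

/-!
By Euler's theorem `Q n` counts the partitions of `n` into odd parts. Counting these by how many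
initial terms of the progression `a, a + 4, a + 8, …` they contain writes `Qbar a n` as an
alternating sum of values of `Q`. The sums of initial terms for `a = 1` and `a = 3` together run
through the positive triangular numbers, so with `T` ranging over all triangular numbers
`Q n - Qbar 3 n - Qbar 1 n = ∑_T (-1) ^ T * Q (n - T)`.
By Gauss's identity `∑_T x ^ T = ∏ (1 - x ^ (2 i)) / (1 - x ^ (2 i - 1))` at `x = -q`, this is the
coefficient of `q ^ n` in `∏ (1 - q ^ (4 i))`. By Euler's pentagonal number theorem it is at most
`1`, vanishes unless `4 ∣ n`, and equals `-1` at `n = 4`; whereas `Q n - Q (n - 1)`, the number of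
partitions of `n` into odd parts other than `1`, is positive unless `n ∈ {1, 2, 4}`.
-/

section GaussIdentity

open Finset

variable {R : Type*} [CommRing R] (x : R)

/-- The coefficient of `x ^ (s * (2 * n + 1))` in Shanks's finite form of Gauss's identity,
multiplied by `∏ i < n, (1 - x ^ (2 * i + 1))` to avoid denominators. -/
def shanksWeight (n s : ℕ) : R :=
  (∏ i ∈ range s, (1 - x ^ (2 * i + 1))) * ∏ i ∈ Ico s n, (1 - x ^ (2 * i + 2))

theorem shanksWeight_zero_right (n : ℕ) :
    shanksWeight x n 0 = ∏ i ∈ range n, (1 - x ^ (2 * i + 2)) := by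
  simp [shanksWeight]

theorem shanksWeight_self (n : ℕ) :
    shanksWeight x n n = ∏ i ∈ range n, (1 - x ^ (2 * i + 1)) := by
  simp [shanksWeight]

theorem shanksWeight_succ_left {n s : ℕ} (h : s ≤ n) :
    shanksWeight x (n + 1) s = shanksWeight x n s * (1 - x ^ (2 * n + 2)) := by
  rw [shanksWeight, prod_Ico_succ_top h, shanksWeight, mul_assoc]

theorem one_sub_pow_mul_shanksWeight {n s : ℕ} (h : s < n) :
    (1 - x ^ (2 * s + 1)) * shanksWeight x n s =
      (1 - x ^ (2 * s + 2)) * shanksWeight x n (s + 1) := by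
  rw [shanksWeight, shanksWeight, prod_eq_prod_Ico_succ_bot h, prod_range_succ]
  ring

theorem sum_shanksWeight_mul_sub (n : ℕ) {m : ℕ} (hm : m ≤ n) :
    ∑ s ∈ range (m + 1), shanksWeight x n s *
        ((1 - x ^ (2 * n + 2)) * x ^ (s * (2 * n + 3)) -
          (1 - x ^ (2 * n + 1)) * x ^ (s * (2 * n + 1))) =
      x ^ ((m + 1) * (2 * n + 1)) * ((1 - x ^ (2 * m + 1)) * shanksWeight x n m) := by
  induction m with
  | zero => simp; ring
  | succ m ih =>
    rw [sum_range_succ, ih (by lia), one_sub_pow_mul_shanksWeight x (by lia)]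
    ring

theorem sum_shanksWeight_mul_pow (n : ℕ) :
    ∑ s ∈ range n, shanksWeight x n s * x ^ (s * (2 * n + 1)) =
      (∏ i ∈ range n, (1 - x ^ (2 * i + 1))) *
        ∑ j ∈ range n, (x ^ (j * (2 * j + 1)) + x ^ ((j + 1) * (2 * j + 1))) := by
  induction n with
  | zero => simp
  | succ n ih =>
    have step := sum_shanksWeight_mul_sub x n le_rfl
    simp only [mul_sub, sum_sub_distrib] at step
    have expand_left : ∑ s ∈ range (n + 1),
        shanksWeight x (n + 1) s * x ^ (s * (2 * (n + 1) + 1)) =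
        ∑ s ∈ range (n + 1),
          shanksWeight x n s * ((1 - x ^ (2 * n + 2)) * x ^ (s * (2 * n + 3))) := by
      refine sum_congr rfl fun s hs ↦ ?_
      rw [shanksWeight_succ_left x (mem_range_succ_iff.1 hs), mul_assoc]
      rfl
    have expand_right : ∑ s ∈ range (n + 1),
        shanksWeight x n s * ((1 - x ^ (2 * n + 1)) * x ^ (s * (2 * n + 1))) =
        (1 - x ^ (2 * n + 1)) * (∏ i ∈ range n, (1 - x ^ (2 * i + 1))) *
          (∑ j ∈ range n, (x ^ (j * (2 * j + 1)) + x ^ ((j + 1) * (2 * j + 1))) +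
            x ^ (n * (2 * n + 1))) := by
      simp only [mul_left_comm _ (1 - x ^ (2 * n + 1))]
      rw [← mul_sum, sum_range_succ, ih, shanksWeight_self]
      ring
    rw [expand_right, shanksWeight_self] at step
    rw [expand_left, sub_eq_iff_eq_add.1 step, prod_range_succ, sum_range_succ]
    ring

-- The exponents `j * (2 * j + 1)` and `(j + 1) * (2 * j + 1)` are the triangular numbers of
-- index `2 * j` and `2 * j + 1`.
theorem pow_dvd_prod_mul_sum_triangular_sub_prod {n : ℕ} (hn : n ≠ 0) :
    x ^ (2 * n + 1) ∣ (∏ i ∈ range n, (1 - x ^ (2 * i + 1))) *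
        ∑ j ∈ range n, (x ^ (j * (2 * j + 1)) + x ^ ((j + 1) * (2 * j + 1))) -
      ∏ i ∈ range n, (1 - x ^ (2 * i + 2)) := by
  obtain ⟨k, rfl⟩ := Nat.exists_eq_add_one_of_ne_zero hn
  rw [← sum_shanksWeight_mul_pow, sum_range_succ', shanksWeight_zero_right, zero_mul, pow_zero,
    mul_one, add_sub_cancel_right]
  exact dvd_sum fun s _ ↦ (pow_dvd_pow x (Nat.le_mul_of_pos_left _ s.succ_pos)).mul_left _

theorem neg_pow_mul_of_odd {b : ℕ} (hb : Odd b) (j : ℕ) :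
    (-x) ^ (j * b) = (-1) ^ j * x ^ (j * b) := by
  rw [mul_comm, pow_mul, hb.neg_pow, neg_pow, pow_mul]

theorem prod_range_two_mul_one_add_pow (n : ℕ) :
    ∏ i ∈ range (2 * n), (1 + x ^ (i + 1)) =
      (∏ i ∈ range n, (1 + x ^ (2 * i + 1))) * ∏ i ∈ range n, (1 + x ^ (2 * i + 2)) := by
  induction n with
  | zero => simp
  | succ n ih =>
    rw [Nat.mul_succ, prod_range_succ, prod_range_succ, ih, prod_range_succ, prod_range_succ]
    ring

theorem pow_dvd_prod_mul_alternating_sum_triangular_sub_prod {n : ℕ} (hn : n ≠ 0) :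
    x ^ (2 * n + 1) ∣ (∏ i ∈ range (2 * n), (1 + x ^ (i + 1))) *
        ∑ j ∈ range n, (-1) ^ j * (x ^ (j * (2 * j + 1)) - x ^ ((j + 1) * (2 * j + 1))) -
      ∏ i ∈ range n, (1 - (x ^ 4) ^ (i + 1)) := by
  have gauss := pow_dvd_prod_mul_sum_triangular_sub_prod (-x) hn
  have odd_factor (i : ℕ) : 1 - (-x) ^ (2 * i + 1) = 1 + x ^ (2 * i + 1) := by
    rw [Odd.neg_pow ⟨i, rfl⟩, sub_neg_eq_add]
  have even_factor (i : ℕ) : 1 - (-x) ^ (2 * i + 2) = 1 - x ^ (2 * i + 2) := by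
    rw [Even.neg_pow ⟨i + 1, by ring⟩]
  have summand (j : ℕ) : (-x) ^ (j * (2 * j + 1)) + (-x) ^ ((j + 1) * (2 * j + 1)) =
      (-1) ^ j * (x ^ (j * (2 * j + 1)) - x ^ ((j + 1) * (2 * j + 1))) := by
    rw [neg_pow_mul_of_odd x ⟨j, rfl⟩, neg_pow_mul_of_odd x ⟨j, rfl⟩]
    ring
  have quartic_factor : ∏ i ∈ range n, (1 - (x ^ 4) ^ (i + 1)) =
      (∏ i ∈ range n, (1 + x ^ (2 * i + 2))) * ∏ i ∈ range n, (1 - x ^ (2 * i + 2)) := by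
    rw [← prod_mul_distrib]
    exact prod_congr rfl fun i _ ↦ by ring
  simp only [odd_factor, even_factor, summand, Odd.neg_pow ⟨n, rfl⟩, neg_dvd] at gauss
  rw [prod_range_two_mul_one_add_pow, quartic_factor,
    mul_comm (∏ i ∈ range n, (1 + x ^ (2 * i + 1))), mul_assoc, ← mul_sub]
  exact gauss.mul_left _

end GaussIdentity

section OddPartitions

open Finset

/-- The partitions of the integer `m` into odd parts, as multisets. The filter only matters for
`m < 0`, where it leaves the empty set. -/
def oddPartitions (m : ℤ) : Finset (Multiset ℕ) :=
  {s ∈ (Nat.Partition.odds m.toNat).image Nat.Partition.parts | (s.sum : ℤ) = m}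

theorem mem_oddPartitions {m : ℤ} {s : Multiset ℕ} :
    s ∈ oddPartitions m ↔ (s.sum : ℤ) = m ∧ ∀ x ∈ s, Odd x := by
  simp only [oddPartitions, Nat.Partition.odds, Nat.Partition.restricted, mem_filter, mem_image,
    mem_univ, true_and, Nat.not_even_iff_odd, and_comm (b := (s.sum : ℤ) = m)]
  refine and_congr_right fun hsum ↦ ⟨?_, fun hodd ↦ ?_⟩
  · rintro ⟨p, hp, rfl⟩
    exact hp
  · exact ⟨⟨s, fun hi ↦ (hodd _ hi).pos, by lia⟩, hodd, rfl⟩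

theorem Q_eq_zero_of_neg {m : ℤ} (hm : m < 0) : Q m = 0 :=
  Nat.subtype_card ∅ fun s ↦ by
    simp only [notMem_empty, false_iff]
    lia

theorem Q_natCast (n : ℕ) : Q n = #(Nat.Partition.distincts n) := by
  rw [← card_image_of_injective _ fun _ _ ↦ Nat.Partition.ext]
  refine Nat.subtype_card _ fun s ↦ ?_
  simp only [Nat.Partition.distincts, mem_image, mem_filter, mem_univ, true_and, Nat.cast_inj]
  constructor
  · rintro ⟨p, hp, rfl⟩
    exact ⟨p.parts_sum, hp, fun _ ↦ p.parts_pos⟩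
  · rintro ⟨hsum, hnodup, hpos⟩
    exact ⟨⟨s, fun hi ↦ hpos _ hi, hsum⟩, hnodup, rfl⟩

theorem Q_eq_card_oddPartitions (m : ℤ) : Q m = #(oddPartitions m) := by
  rcases lt_or_ge m 0 with hm | hm
  · rw [Q_eq_zero_of_neg hm, eq_comm, card_eq_zero, eq_empty_iff_forall_notMem]
    intro s hs
    have := (mem_oddPartitions.1 hs).1
    lia
  · lift m to ℕ using hm
    have filter_trivial : oddPartitions m =
        (Nat.Partition.odds m).image Nat.Partition.parts := by
      refine filter_true_of_mem fun s hs ↦ ?_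
      obtain ⟨p, -, rfl⟩ := mem_image.1 hs
      exact congrArg Nat.cast p.parts_sum
    rw [Q_natCast, ← Nat.Partition.card_odds_eq_card_distincts, filter_trivial,
      card_image_of_injective _ fun _ _ ↦ Nat.Partition.ext]

theorem card_filter_le_oddPartitions {t : Multiset ℕ} (ht : ∀ x ∈ t, Odd x) (m : ℤ) :
    #{s ∈ oddPartitions m | t ≤ s} = Q (m - t.sum) := by
  rw [Q_eq_card_oddPartitions,
    ← card_image_of_injective (oddPartitions (m - t.sum)) (add_right_injective t)]
  congr 1
  ext s
  simp only [mem_filter, mem_image, mem_oddPartitions]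
  constructor
  · rintro ⟨⟨hsum, hodd⟩, hle⟩
    obtain ⟨u, rfl⟩ := Multiset.le_iff_exists_add.1 hle
    rw [Multiset.sum_add, Nat.cast_add] at hsum
    exact ⟨u, ⟨by lia, fun x hx ↦ hodd x (Multiset.mem_add.2 (.inr hx))⟩, rfl⟩
  · rintro ⟨u, ⟨hsum, hodd⟩, rfl⟩
    refine ⟨⟨?_, fun x hx ↦ (Multiset.mem_add.1 hx).elim (ht x) (hodd x)⟩,
      Multiset.le_add_right t u⟩
    rw [Multiset.sum_add, Nat.cast_add, hsum, add_sub_cancel]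

theorem Q_sub_one_add_card_one_notMem (m : ℤ) :
    Q (m - 1) + #{s ∈ oddPartitions m | 1 ∉ s} = Q m := by
  have one_mem := card_filter_le_oddPartitions (t := {1}) (by simp) m
  simp only [Multiset.singleton_le, Multiset.sum_singleton, Nat.cast_one] at one_mem
  rw [← one_mem, card_filter_add_card_filter_not, Q_eq_card_oddPartitions]

theorem Q_sub_one_le (m : ℤ) : Q (m - 1) ≤ Q m := by
  rw [← Q_sub_one_add_card_one_notMem m]
  exact Nat.le_add_right _ _

theorem exists_mem_oddPartitions_one_notMem {n : ℕ} (h1 : n ≠ 1) (h2 : n ≠ 2) (h4 : n ≠ 4) :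
    ∃ s ∈ oddPartitions n, 1 ∉ s := by
  simp only [mem_oddPartitions, Nat.cast_inj]
  rcases n.even_or_odd with hn | hn
  · rcases eq_or_ne n 0 with rfl | h0
    · exact ⟨0, by simp⟩
    · refine ⟨{3, n - 3}, ⟨?_, ?_⟩, ?_⟩
      · simp only [Multiset.insert_eq_cons, Multiset.sum_cons, Multiset.sum_singleton]
        grind
      · simp only [Multiset.insert_eq_cons, Multiset.mem_cons, Multiset.mem_singleton,
          forall_eq_or_imp, forall_eq]
        grind
      · simp only [Multiset.insert_eq_cons, Multiset.mem_cons, Multiset.mem_singleton]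
        grind
  · exact ⟨{n}, by simpa [hn] using h1.symm⟩

theorem Q_sub_one_lt {n : ℕ} (h1 : n ≠ 1) (h2 : n ≠ 2) (h4 : n ≠ 4) : Q ((n : ℤ) - 1) < Q n := by
  obtain ⟨s, hs, hs1⟩ := exists_mem_oddPartitions_one_notMem h1 h2 h4
  rw [← Q_sub_one_add_card_one_notMem n]
  exact Nat.lt_add_of_pos_right (card_pos.2 ⟨s, mem_filter.2 ⟨hs, hs1⟩⟩)

end OddPartitions

section Mex

open Finset

theorem card_filter_odd_eq_alternating_sum {ι : Type*} (S : Finset ι) (f : ι → ℕ) {N : ℕ}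
    (hf : ∀ s ∈ S, f s ≤ N) :
    (#{s ∈ S | Odd (f s)} : ℤ) = ∑ j ∈ range N, (-1) ^ j * (#{s ∈ S | j < f s} : ℤ) := by
  have indicator (s : ι) (hs : s ∈ S) :
      (if Odd (f s) then 1 else 0 : ℤ) = ∑ j ∈ range N, if j < f s then (-1) ^ j else 0 := by
    have below : {j ∈ range N | j < f s} = range (f s) := by
      ext j
      have := hf s hs
      simp only [mem_filter, mem_range]
      lia
    rw [← sum_filter, below, neg_one_geom_sum]
    simp only [← Nat.not_even_iff_odd, ite_not]
  simp only [natCast_card_filter, mul_sum, mul_ite, mul_one, mul_zero]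
  rw [sum_comm, sum_congr rfl indicator]

/-- The number of initial terms of the progression `a, a + A, a + 2 * A, …` that are parts of `s`,
so that `mex_{A,a}(s) = a + A * mexIndex A a s`. -/
noncomputable def mexIndex (A a : ℕ) (s : Multiset ℕ) : ℕ :=
  sInf {k | a + A * k ∉ s}

variable {A a : ℕ} {s : Multiset ℕ}

theorem add_mul_sum_notMem (hA : 0 < A) (ha : 0 < a) : a + A * s.sum ∉ s := fun h ↦ by
  have := Multiset.le_sum_of_mem h
  have := Nat.le_mul_of_pos_left s.sum hA
  lia

theorem mexIndex_le_sum (hA : 0 < A) (ha : 0 < a) : mexIndex A a s ≤ s.sum :=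
  Nat.sInf_le (add_mul_sum_notMem hA ha)

theorem add_mul_mexIndex_notMem (hA : 0 < A) (ha : 0 < a) : a + A * mexIndex A a s ∉ s :=
  Nat.sInf_mem (s := {k | a + A * k ∉ s}) ⟨_, add_mul_sum_notMem hA ha⟩

theorem add_mul_mem_of_lt_mexIndex {i : ℕ} (hi : i < mexIndex A a s) : a + A * i ∈ s :=
  not_not.1 (Nat.notMem_of_lt_sInf hi)

theorem le_mexIndex_iff (hA : 0 < A) (ha : 0 < a) {k : ℕ} :
    k ≤ mexIndex A a s ↔ ∀ i < k, a + A * i ∈ s :=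
  ⟨fun hk _ hi ↦ add_mul_mem_of_lt_mexIndex (hi.trans_le hk),
    fun h ↦ not_lt.1 fun hk ↦ add_mul_mexIndex_notMem hA ha (h _ hk)⟩

theorem sInf_mex_eq (ha : 0 < a) (haA : a < A) :
    sInf {x : ℕ | 0 < x ∧ x % A = a % A ∧ x ∉ s} = a + A * mexIndex A a s := by
  refine IsLeast.csInf_eq ⟨⟨by lia, Nat.add_mul_mod_self_left _ _ _,
    add_mul_mexIndex_notMem (ha.trans haA) ha⟩, ?_⟩
  rintro x ⟨-, hmod, hx⟩
  rw [Nat.mod_eq_of_lt haA] at hmod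
  have hdiv : a + A * (x / A) = x := hmod ▸ Nat.mod_add_div x A
  rw [← hdiv] at hx ⊢
  gcongr
  exact Nat.sInf_le hx

/-- The first `k` terms of the progression `a, a + A, a + 2 * A, …`, as a multiset. -/
def progression (A a k : ℕ) : Multiset ℕ := (Multiset.range k).map fun i ↦ a + A * i

theorem progression_le_iff (hA : 0 < A) {k : ℕ} :
    progression A a k ≤ s ↔ ∀ i < k, a + A * i ∈ s := by
  have nodup : (progression A a k).Nodup :=
    (Multiset.nodup_range k).map fun _ _ h ↦ Nat.eq_of_mul_eq_mul_left hA (Nat.add_left_cancel h)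
  rw [Multiset.le_iff_subset nodup, Multiset.subset_iff]
  simp [progression]

theorem odd_of_mem_progression (hA : Even A) (ha : Odd a) {k x : ℕ} (hx : x ∈ progression A a k) :
    Odd x := by
  obtain ⟨i, -, rfl⟩ := Multiset.mem_map.1 hx
  exact ha.add_even (hA.mul_right i)

theorem Qbar_eq_card_odd_mexIndex (ha : 0 < a) (ha4 : a < 4) (m : ℤ) :
    Qbar a m = #{s ∈ oddPartitions m | Odd (mexIndex 4 a s)} := by
  refine Nat.subtype_card _ fun s ↦ ?_
  have mod_eight : (a + 4 * mexIndex 4 a s) % 8 = (4 + a) % 8 ↔ Odd (mexIndex 4 a s) := by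
    rw [Nat.odd_iff]
    lia
  rw [sInf_mex_eq ha ha4, mod_eight, mem_filter, mem_oddPartitions, and_assoc]

theorem Qbar_eq_alternating_sum (ha : Odd a) (ha4 : a < 4) {n N : ℕ} (hN : n ≤ N) :
    (Qbar a n : ℤ) =
      ∑ j ∈ range N, (-1) ^ j * (Q (n - (progression 4 a (j + 1)).sum) : ℤ) := by
  rw [Qbar_eq_card_odd_mexIndex ha.pos ha4, card_filter_odd_eq_alternating_sum (N := N)]
  · refine sum_congr rfl fun j _ ↦ ?_
    rw [← card_filter_le_oddPartitions fun _ ↦ odd_of_mem_progression (by decide) ha]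
    simp only [progression_le_iff four_pos, ← le_mexIndex_iff four_pos ha.pos, Nat.add_one_le_iff]
  · intro s hs
    have hsum := Nat.cast_inj.1 (mem_oddPartitions.1 hs).1
    exact (mexIndex_le_sum four_pos ha.pos).trans (hsum.trans_le hN)

theorem sum_progression_four (a j : ℕ) :
    (progression 4 a (j + 1)).sum = (j + 1) * (2 * j + a) := by
  change ∑ i ∈ range (j + 1), (a + 4 * i) = (j + 1) * (2 * j + a)
  induction j with
  | zero => simp
  | succ j ih => rw [sum_range_succ, ih]; ring

end Mex

section GeneratingFunctions

open Finset Filter PowerSeries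
open scoped PowerSeries.WithPiTopology

variable (R : Type*) [CommRing R]

theorem eventually_coeff_prod_one_add_X_pow (m : ℕ) :
    ∀ᶠ N in atTop, coeff m (∏ i ∈ range N, (1 + X ^ (i + 1) : R⟦X⟧)) = Q m := by
  let : TopologicalSpace R := ⊥
  have : DiscreteTopology R := ⟨rfl⟩
  have factor (i : ℕ) : ∑ j ∈ range 2, (X : R⟦X⟧) ^ ((i + 1) * j) = 1 + X ^ (i + 1) := by
    simp [sum_range_succ]
  have distincts_product :=
    (Nat.Partition.hasProd_powerSeriesMk_card_countRestricted R two_pos).tendsto_prod_nat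
  have coeff_tendsto := (WithPiTopology.tendsto_iff_coeff_tendsto ..).1 distincts_product m
  simpa [factor, Nat.Partition.countRestricted_two, Q_natCast] using coeff_tendsto

theorem eventually_coeff_prod_mul_X_pow (m : ℕ) :
    ∀ᶠ N : ℕ in atTop, ∀ d : ℕ,
      coeff m ((∏ i ∈ range N, (1 + X ^ (i + 1))) * X ^ d : R⟦X⟧) = Q (m - d) := by
  have stable : ∀ᶠ N in atTop, ∀ k ∈ range (m + 1),
      coeff k (∏ i ∈ range N, (1 + X ^ (i + 1) : R⟦X⟧)) = Q k :=
    (eventually_all_finset _).2 fun k _ ↦ eventually_coeff_prod_one_add_X_pow R k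
  filter_upwards [stable] with N hN d
  rw [coeff_mul_X_pow']
  split_ifs with hd
  · rw [hN _ (by simp only [mem_range]; lia), Nat.cast_sub hd]
  · rw [Q_eq_zero_of_neg (by lia), Nat.cast_zero]

theorem eventually_coeff_prod_one_sub_X_pow_pow {p : ℕ} (hp : p ≠ 0) (m : ℕ) :
    ∀ᶠ N in atTop, coeff m (∏ i ∈ range N, (1 - (X ^ p) ^ (i + 1) : R⟦X⟧)) =
      coeff m (expand p hp (pentagonalSeries R)) := by
  have pentagonal_theorem := tendsto_finset_range.eventually
    (coeff_prod_one_sub_X_pow_eventually_eq R (m / p))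
  filter_upwards [pentagonal_theorem] with N hN
  have expand_prod : ∏ i ∈ range N, (1 - (X ^ p) ^ (i + 1) : R⟦X⟧) =
      expand p hp (∏ i ∈ range N, (1 - X ^ (i + 1))) := by
    simp only [map_prod, map_sub, map_one, map_pow, expand_X]
  rw [expand_prod, coeff_expand, coeff_expand, hN]

theorem eventually_alternating_sum_Q_eq_coeff (m : ℕ) :
    ∀ᶠ n in atTop,
      ∑ j ∈ range n, (-1) ^ j *
        ((Q (m - (j * (2 * j + 1) : ℕ)) : R) - Q (m - ((j + 1) * (2 * j + 1) : ℕ))) =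
      coeff m (expand 4 four_ne_zero (pentagonalSeries R)) := by
  have tendsto_double : Tendsto (fun n : ℕ ↦ 2 * n) atTop atTop :=
    tendsto_id.const_mul_atTop' two_pos
  filter_upwards [tendsto_double.eventually (eventually_coeff_prod_mul_X_pow R m),
    eventually_coeff_prod_one_sub_X_pow_pow R four_ne_zero m, eventually_ge_atTop m,
    eventually_ne_atTop 0] with n coeff_shift coeff_product hmn hn
  have gauss := X_pow_dvd_iff.1
    (pow_dvd_prod_mul_alternating_sum_triangular_sub_prod (X : R⟦X⟧) hn) m (by lia)
  rw [map_sub, coeff_product, sub_eq_zero] at gauss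
  rw [← gauss, mul_sum, map_sum]
  refine sum_congr rfl fun j _ ↦ ?_
  have sign : (-1 : R⟦X⟧) ^ j = C ((-1) ^ j) := by simp
  rw [mul_left_comm, sign, coeff_C_mul, mul_sub (∏ i ∈ _, _), map_sub, coeff_shift, coeff_shift]

theorem Q_sub_Qbar_three_sub_Qbar_one (m : ℕ) :
    (Q m : ℤ) - Qbar 3 m - Qbar 1 m =
      coeff m (expand 4 four_ne_zero (pentagonalSeries ℤ)) := by
  obtain ⟨n, alternating_sum, hmn⟩ :=
    ((eventually_alternating_sum_Q_eq_coeff ℤ m).and (eventually_gt_atTop m)).exists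
  obtain ⟨k, rfl⟩ := Nat.exists_eq_add_one_of_ne_zero (Nat.ne_zero_of_lt hmn)
  have odd_terms : (Qbar 1 m : ℤ) =
      ∑ j ∈ range (k + 1), (-1) ^ j * (Q (m - ((j + 1) * (2 * j + 1) : ℕ)) : ℤ) := by
    simp only [Qbar_eq_alternating_sum odd_one (by decide) hmn.le, sum_progression_four]
  have even_terms : (Q m : ℤ) - Qbar 3 m =
      ∑ j ∈ range (k + 1), (-1) ^ j * (Q (m - (j * (2 * j + 1) : ℕ)) : ℤ) := by
    simp only [Qbar_eq_alternating_sum (a := 3) (by decide) (by decide) (Nat.le_of_lt_succ hmn),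
      sum_progression_four, sum_range_succ' _ k, pow_succ, mul_neg_one, neg_mul, sum_neg_distrib,
      pow_zero, one_mul, zero_mul, Nat.cast_zero, sub_zero, mul_add_one, Nat.reduceAdd]
    exact sub_eq_neg_add _ _
  simp only [mul_sub, sum_sub_distrib] at alternating_sum
  rw [even_terms, odd_terms, alternating_sum]

theorem coeff_pentagonalSeries_le_one (n : ℕ) : coeff n (pentagonalSeries ℤ) ≤ 1 := by
  by_cases hn : n ∈ Set.range pentagonal
  · obtain ⟨k, rfl⟩ := hn
    rw [coeff_pentagonalSeries_pentagonal]
    rcases Int.units_eq_one_or (Int.negOnePow k) with h | h <;> simp [h]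
  · rw [coeff_pentagonalSeries_eq_zero ℤ hn]
    exact zero_le_one

theorem coeff_one_pentagonalSeries : coeff 1 (pentagonalSeries R) = -1 := by
  simpa [show pentagonal 1 = 1 by decide] using coeff_pentagonalSeries_pentagonal R 1

theorem coeff_expand_four_pentagonalSeries_le (m : ℕ) :
    coeff m (expand 4 four_ne_zero (pentagonalSeries ℤ)) ≤ (Q m : ℤ) - Q ((m : ℤ) - 1) := by
  have mono := Q_sub_one_le m
  rw [coeff_expand]
  split_ifs with hdvd
  · rcases eq_or_ne m 4 with rfl | hm
    · refine (coeff_one_pentagonalSeries ℤ).trans_le ?_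
      lia
    · have strict := Q_sub_one_lt (n := m) (by lia) (by lia) hm
      refine (coeff_pentagonalSeries_le_one _).trans ?_
      lia
  · lia

end GeneratingFunctions

/-- For every `n ≥ 0`, `Q̄_{4,3}(n) + Q̄_{4,1}(n) ≥ Q(n − 1)`. -/
theorem stmt6 (n : ℤ) (hn : 0 ≤ n) : Q (n - 1) ≤ Qbar 3 n + Qbar 1 n := by
  lift n to ℕ using hn
  have identity := Q_sub_Qbar_three_sub_Qbar_one n
  have bound := coeff_expand_four_pentagonalSeries_le n
  rw [← identity] at bound
  lia
end
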